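/- For all nonnegative integers a and b, the number of plane partitions contained in an a×a×2b box equals the number of symmetric plane partitions contained in that box multiplied by the number of transpose-complementary plane partitions contained in that box. (Equation (1.1): P(a,a,2b) = S(a,a,2b)·TC(a,a,2b).) -/

import Mathlib

/-- The transpose of (the diagram of) a plane partition contained in an `a × a × c` box:
`(i,j,k)` is in the transpose iff `(j,i,k)` is in `T`. -/
def ppTranspose {a c : ℕ} (T : Set (Fin a × Fin a × Fin c)) : Set (Fin a × Fin a × Fin c) :=
  {x | (x.2.1, x.1, x.2.2) ∈ T}

/-- The complement of (the diagram of) a plane partition contained in an `a × b × c` box: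
`(i,j,k)` is in the complement iff `(a-1-i, b-1-j, c-1-k)` is not in `T`. -/
def ppComplement {a b c : ℕ} (T : Set (Fin a × Fin b × Fin c)) : Set (Fin a × Fin b × Fin c) :=
  {x | (x.1.rev, x.2.1.rev, x.2.2.rev) ∉ T}

/-!
Read layer by layer, a plane partition is a family of vicious (nonintersecting) walkers that start
and end in the same equally spaced configuration, so that `P(a,a,2b)` is a
Lindström–Gessel–Viennot determinant. The configuration is symmetric about the origin, hence the
determinant of the matrix with entries `f (xᵢ - xⱼ)` factors into the determinants of the matrices
with entries `f (yᵢ - yⱼ) - f (yᵢ + yⱼ)` and `f (yᵢ - yⱼ) + f (yᵢ + yⱼ)`, where the `yᵢ` are the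
positive starting points. By the reflection principle, the former counts the walkers that start
from the `yᵢ` and stay positive. These are the halves of the configurations symmetric about the
origin, that is, the transpose-complementary plane partitions. A symmetric plane partition
corresponds to a palindromic walk, that is, to a walk of `a` steps with free end point. The number
of these is a Pfaffian, which for symmetric starting points reduces to the latter determinant.
-/

open Equiv Finset Matrix

section Pfaffian

variable {ι κ R : Type*} [Fintype κ] [DecidableEq κ] [CommRing R]

/-- The signed sum over all permutations of `κ ⊕ κ` which, for an alternating matrix `A`, equals
`2 ^ n * n !` times the Pfaffian of `A`, where `n` is the cardinality of `κ`. Allowing arbitrary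
matrices and repeated terms makes it multilinear in the entries, without dividing by anything. -/
def pfaffianSum (A : Matrix (κ ⊕ κ) (κ ⊕ κ) R) : R :=
  ∑ σ : Perm (κ ⊕ κ), ((Perm.sign σ : ℤ) : R) * ∏ k, A (σ (.inl k)) (σ (.inr k))

theorem pfaffianSum_submatrix_perm (τ : Perm (κ ⊕ κ)) (A : Matrix (κ ⊕ κ) (κ ⊕ κ) R) :
    pfaffianSum (A.submatrix τ τ) = ((Perm.sign τ : ℤ) : R) * pfaffianSum A := by
  simp only [pfaffianSum, Finset.mul_sum]
  refine Fintype.sum_equiv (Equiv.mulLeft τ) _ _ fun σ ↦ ?_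
  obtain h | h := Int.units_eq_one_or (Perm.sign τ) <;> simp [h]

theorem pfaffianSum_submatrix_eq_zero (A : Matrix ι ι R) {f : κ ⊕ κ → ι}
    (hf : ¬ f.Injective) : pfaffianSum (A.submatrix f f) = 0 := by
  obtain ⟨i, j, hij, hne⟩ := Function.not_injective_iff.1 hf
  have hswap (x : κ ⊕ κ) : f (swap i j x) = f x := by
    rw [swap_apply_def]; split_ifs <;> simp_all
  refine Finset.sum_involution (fun σ _ ↦ swap i j * σ) (fun σ _ ↦ ?_) (fun σ _ _ ↦ ?_)
    (fun _ _ ↦ mem_univ _) (fun σ _ ↦ ?_)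
  · simp [Perm.sign_swap hne, hswap]
  · simpa [swap_eq_one_iff] using hne
  · simp

theorem pfaffianSum_sum_sum {E : Type*} [Fintype E]
    (K : κ ⊕ κ → κ ⊕ κ → E → E → R) :
    pfaffianSum (of fun p q ↦ ∑ e, ∑ e', K p q e e')
      = ∑ f : κ ⊕ κ → E, pfaffianSum (of fun p q ↦ K p q (f p) (f q)) := by
  classical
  have hσ (σ : Perm (κ ⊕ κ)) :
      ∏ k, ∑ e, ∑ e', K (σ (.inl k)) (σ (.inr k)) e e'
        = ∑ f : κ ⊕ κ → E,
            ∏ k, K (σ (.inl k)) (σ (.inr k)) (f (σ (.inl k))) (f (σ (.inr k))) := by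
    calc
      _ = ∏ k, ∑ e : E × E, K (σ (.inl k)) (σ (.inr k)) e.1 e.2 := by
        simp only [Fintype.sum_prod_type]
      _ = ∑ g : κ → E × E, ∏ k, K (σ (.inl k)) (σ (.inr k)) (g k).1 (g k).2 := by
        rw [prod_univ_sum, Fintype.piFinset_univ]
      _ = _ := Fintype.sum_equiv
        ((arrowProdEquivProdArrow κ (fun _ ↦ E) (fun _ ↦ E)).trans
          ((sumArrowEquivProdArrow κ κ E).symm.trans (σ.arrowCongr (Equiv.refl E)))) _ _
        fun g ↦ by simp [arrowProdEquivProdArrow, sumArrowEquivProdArrow]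
  simp only [pfaffianSum, of_apply, hσ, Finset.mul_sum]
  exact sum_comm

theorem pfaffianSum_mul_mul_transpose (P A : Matrix (κ ⊕ κ) (κ ⊕ κ) R) :
    pfaffianSum (P * A * Pᵀ) = P.det * pfaffianSum A := by
  have hscale (f : κ ⊕ κ → κ ⊕ κ) :
      pfaffianSum (of fun p q ↦ P p (f p) * A (f p) (f q) * P q (f q))
        = (∏ p, P p (f p)) * pfaffianSum (A.submatrix f f) := by
    unfold pfaffianSum
    rw [Finset.mul_sum]
    refine Finset.sum_congr rfl fun σ _ ↦ ?_
    rw [← Equiv.prod_comp σ fun p ↦ P p (f p), Fintype.prod_sum_type]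
    simp only [of_apply, submatrix_apply, prod_mul_distrib]
    ring
  calc
    pfaffianSum (P * A * Pᵀ)
      = pfaffianSum (of fun p q ↦ ∑ i, ∑ j, P p i * A i j * P q j) := by
        congr 1
        ext p q
        simp only [mul_apply, sum_mul, transpose_apply, of_apply]
        exact sum_comm
    _ = ∑ f : κ ⊕ κ → κ ⊕ κ, (∏ p, P p (f p)) * pfaffianSum (A.submatrix f f) := by
        rw [pfaffianSum_sum_sum fun p q i j ↦ P p i * A i j * P q j]
        exact Finset.sum_congr rfl fun f _ ↦ hscale f
    _ = ∑ τ : Perm (κ ⊕ κ), (∏ p, P p (τ p)) * pfaffianSum (A.submatrix τ τ) := by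
        refine (Fintype.sum_of_injective _ DFunLike.coe_injective _ _ (fun f hf ↦ ?_)
          fun _ ↦ rfl).symm
        rw [pfaffianSum_submatrix_eq_zero, mul_zero]
        exact fun hinj ↦ hf ⟨.ofBijective f (Finite.injective_iff_bijective.1 hinj), rfl⟩
    _ = P.det * pfaffianSum A := by
        rw [← det_transpose, det_apply', Finset.sum_mul]
        refine Finset.sum_congr rfl fun τ _ ↦ ?_
        rw [pfaffianSum_submatrix_perm]
        simp only [transpose_apply]
        ring

theorem pfaffianSum_sub_transpose (A : Matrix (κ ⊕ κ) (κ ⊕ κ) R) :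
    pfaffianSum (A - Aᵀ) = 2 ^ Fintype.card κ * pfaffianSum A := by
  let flip (e : κ → Perm Bool) : Perm (κ ⊕ κ) :=
    (boolProdEquivSum κ).permCongr (prodCongrLeft e)
  have hsign (e : κ → Perm Bool) : Perm.sign (flip e) = ∏ k, Perm.sign (e k) := by
    rw [Perm.sign_permCongr, Perm.sign_prodCongrLeft]
  have hentry (σ : Perm (κ ⊕ κ)) (k : κ) :
      (A - Aᵀ) (σ (.inl k)) (σ (.inr k)) = ∑ ρ : Perm Bool, ((Perm.sign ρ : ℤ) : R) *
        A (σ (boolProdEquivSum κ (ρ false, k))) (σ (boolProdEquivSum κ (ρ true, k))) := by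
    rw [show (univ : Finset (Perm Bool)) = {1, swap false true} by decide,
      sum_pair (by decide), Perm.sign_swap (by decide)]
    simp [sub_eq_add_neg]
  have hterm (σ : Perm (κ ⊕ κ)) :
      ∏ k, (A - Aᵀ) (σ (.inl k)) (σ (.inr k)) = ∑ e, ((Perm.sign (flip e) : ℤ) : R) *
        ∏ k, A ((σ * flip e) (.inl k)) ((σ * flip e) (.inr k)) := by
    simp only [hentry, prod_univ_sum, Fintype.piFinset_univ, prod_mul_distrib, hsign]
    simp [flip, permCongr_apply]
  calc
    pfaffianSum (A - Aᵀ)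
      = ∑ e, ∑ σ, ((Perm.sign (σ * flip e) : ℤ) : R) *
          ∏ k, A ((σ * flip e) (.inl k)) ((σ * flip e) (.inr k)) := by
        simp only [pfaffianSum, hterm, Finset.mul_sum, Perm.sign_mul, Units.val_mul, Int.cast_mul,
          mul_assoc]
        exact sum_comm
    _ = ∑ _e : κ → Perm Bool, pfaffianSum A :=
        Finset.sum_congr rfl fun e _ ↦ Fintype.sum_equiv (Equiv.mulRight (flip e)) _ _ fun _ ↦ rfl
    _ = 2 ^ Fintype.card κ * pfaffianSum A := by
        simp [Fintype.card_perm]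

theorem pfaffianSum_fromBlocks_zero (X : Matrix κ κ R) :
    pfaffianSum (fromBlocks 0 X 0 0) = (Fintype.card κ).factorial * X.det := by
  have hzero (σ : Perm (κ ⊕ κ)) (hσ : σ ∉ Set.range (Perm.sumCongrHom κ κ)) :
      ∃ k, fromBlocks 0 X 0 0 (σ (.inl k)) (σ (.inr k)) = 0 := by
    contrapose! hσ
    refine MonoidHom.mem_range.1 (Perm.mem_sumCongrHom_range_of_perm_mapsTo_inl ?_)
    rintro _ ⟨k, rfl⟩
    have hk := hσ k
    rcases h : σ (.inl k) with i | i
    · exact ⟨i, rfl⟩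
    · rcases h' : σ (.inr k) with j | j <;> simp [h, h'] at hk
  calc
    pfaffianSum (fromBlocks 0 X 0 0)
      = ∑ τ : Perm κ × Perm κ,
          ((Perm.sign τ.1 : ℤ) : R) * (((Perm.sign τ.2 : ℤ) : R) * ∏ k, X (τ.1 k) (τ.2 k)) := by
        refine (Fintype.sum_of_injective _ Perm.sumCongrHom_injective _ _ (fun σ hσ ↦ ?_)
          fun τ ↦ ?_).symm
        · obtain ⟨k, hk⟩ := hzero σ hσ
          rw [prod_eq_zero (mem_univ k) hk, mul_zero]
        · simp [Perm.sumCongrHom, Perm.sign_sumCongr, mul_assoc]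
    _ = ∑ τ : Perm κ, ((Perm.sign τ : ℤ) : R) * (X.submatrix τ id).det := by
        rw [Fintype.sum_prod_type]
        refine Finset.sum_congr rfl fun τ _ ↦ ?_
        simp only [← Finset.mul_sum]
        rw [← det_transpose, det_apply']
        rfl
    _ = ∑ _τ : Perm κ, X.det := by
        refine Finset.sum_congr rfl fun τ _ ↦ ?_
        rw [det_permute, ← mul_assoc, ← Int.cast_mul, ← Units.val_mul, Int.units_mul_self]
        simp
    _ = (Fintype.card κ).factorial * X.det := by
        simp [Fintype.card_perm]

theorem pfaffianSum_fromBlocks_neg_transpose (X : Matrix κ κ R) :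
    pfaffianSum (fromBlocks 0 X (-Xᵀ) 0)
      = 2 ^ Fintype.card κ * (Fintype.card κ).factorial * X.det := by
  have h : fromBlocks 0 X (-Xᵀ) 0 = fromBlocks 0 X 0 0 - (fromBlocks 0 X 0 0)ᵀ := by
    simp [fromBlocks_transpose, sub_eq_add_neg, fromBlocks_neg, fromBlocks_add]
  rw [h, pfaffianSum_sub_transpose, pfaffianSum_fromBlocks_zero, mul_assoc]

end Pfaffian

theorem det_fromBlocks_swap_symmetric {κ R : Type*} [Fintype κ] [DecidableEq κ] [CommRing R]
    (A B : Matrix κ κ R) : (fromBlocks A B B A).det = (A + B).det * (A - B).det := by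
  have h : fromBlocks 1 1 0 1 * fromBlocks A B B A * fromBlocks 1 (-1) 0 1
      = fromBlocks (A + B) 0 B (A - B) := by
    simp only [fromBlocks_multiply]
    congr 1 <;> simp <;> abel
  have hdet := congrArg det h
  simpa [det_mul, det_fromBlocks_zero₂₁, det_fromBlocks_zero₁₂] using hdet

section Walks

variable {ι R : Type*} {A E : Set (ι → ℤ)} {x : ι → ℤ} {t : ℕ} {u : ℕ → ι → ℤ}

/-- `IsWalk A E x t u` says that `u` is a walk of `t` steps from `x` to a point of `E`, staying
in `A`, in which every coordinate changes by `1` or `-1` at each step. Walks are indexed by all of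
`ℕ`, and are constant after the last step. -/
structure IsWalk (A E : Set (ι → ℤ)) (x : ι → ℤ) (t : ℕ) (u : ℕ → ι → ℤ) : Prop where
  zero : u 0 = x
  mem : ∀ s, u s ∈ A
  step : ∀ s < t, ∀ k, (u (s + 1) k - u s k).natAbs = 1
  const : ∀ s, t ≤ s → u s = u t
  finish : u t ∈ E

/-- The sequence `x, u 0, u 1, …`. -/
def walkCons (x : ι → ℤ) (u : ℕ → ι → ℤ) : ℕ → ι → ℤ
  | 0 => x
  | s + 1 => u s

theorem IsWalk.cons (hx : x ∈ A) {ε : ι → ℤˣ} (hu : IsWalk A E (fun k ↦ x k + ε k) t u) :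
    IsWalk A E x (t + 1) (walkCons x u) where
  zero := rfl
  mem
    | 0 => hx
    | s + 1 => hu.mem s
  step
    | 0, _, k => by simp [walkCons, hu.zero]
    | s + 1, hs, k => hu.step s (by omega) k
  const
    | s + 1, hs => hu.const s (by omega)
  finish := hu.finish

theorem IsWalk.tail (hu : IsWalk A E x (t + 1) u) : IsWalk A E (u 1) t (fun s ↦ u (s + 1)) where
  zero := rfl
  mem s := hu.mem (s + 1)
  step s hs := hu.step (s + 1) (by omega)
  const s hs := hu.const (s + 1) (by omega)
  finish := hu.finish

theorem IsWalk.exists_units (hu : IsWalk A E x (t + 1) u) :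
    ∃ ε : ι → ℤˣ, u 1 = fun k ↦ x k + ε k := by
  have hunit (k : ι) : IsUnit (u 1 k - u 0 k) :=
    Int.isUnit_iff_natAbs_eq.2 (hu.step 0 (by omega) k)
  exact ⟨fun k ↦ (hunit k).unit, funext fun k ↦ by simp [hu.zero]⟩

theorem bijective_walkCons (hx : x ∈ A) :
    Function.Bijective (fun w : Σ ε : ι → ℤˣ, {u // IsWalk A E (fun k ↦ x k + ε k) t u} ↦
      (⟨walkCons x w.2, w.2.2.cons hx⟩ : {u // IsWalk A E x (t + 1) u})) := by
  constructor
  · rintro ⟨ε, u, hu⟩ ⟨ε', u', hu'⟩ h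
    have huu' : u = u' := funext fun s ↦ congrFun (congrArg Subtype.val h) (s + 1)
    have hεε' : ε = ε' := funext fun k ↦ by
      have := congrFun (hu.zero.symm.trans (huu' ▸ hu'.zero)) k
      exact Units.ext (add_left_cancel this)
    subst huu' hεε'
    rfl
  · rintro ⟨u, hu⟩
    obtain ⟨ε, hε⟩ := hu.exists_units
    refine ⟨⟨ε, _, hε ▸ hu.tail⟩, Subtype.ext (funext fun s ↦ ?_)⟩
    cases s with
    | zero => exact hu.zero.symm
    | succ s => rfl

theorem isEmpty_isWalk (hx : x ∉ A) : IsEmpty {u // IsWalk A E x t u} :=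
  ⟨fun u ↦ hx (u.2.zero ▸ u.2.mem 0)⟩

theorem subsingleton_isWalk_zero : Subsingleton {u // IsWalk A E x 0 u} :=
  ⟨fun u v ↦ Subtype.ext <| funext fun s ↦ by
    rw [u.2.const s s.zero_le, v.2.const s s.zero_le, u.2.zero, v.2.zero]⟩

theorem finite_isWalk [Finite ι] : Finite {u // IsWalk A E x t u} := by
  induction t generalizing x with
  | zero =>
    have := subsingleton_isWalk_zero (A := A) (E := E) (x := x)
    infer_instance
  | succ t ih =>
    by_cases hx : x ∈ A
    · exact .of_surjective _ (bijective_walkCons hx).surjective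
    · have := isEmpty_isWalk (E := E) (t := t + 1) hx
      infer_instance

theorem natCard_isWalk_succ [Fintype ι] [DecidableEq ι] (hx : x ∈ A) :
    Nat.card {u // IsWalk A E x (t + 1) u}
      = ∑ ε : ι → ℤˣ, Nat.card {u // IsWalk A E (fun k ↦ x k + ε k) t u} := by
  have (ε : ι → ℤˣ) := finite_isWalk (A := A) (E := E) (x := fun k ↦ x k + ε k) (t := t)
  rw [← Nat.card_sigma, Nat.card_eq_of_bijective _ (bijective_walkCons hx)]

theorem natCard_isWalk_mul [Fintype ι] [DecidableEq ι] [Semiring R] {F : ℕ → (ι → ℤ) → R} {c : R}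
    (hmem : ∀ x ∈ A, x ∈ E → F 0 x = c) (hnotMem : ∀ x ∈ A, x ∉ E → F 0 x = 0)
    (hsucc : ∀ t x, F (t + 1) x = ∑ ε : ι → ℤˣ, F t (fun k ↦ x k + ε k))
    (hexit : ∀ t, ∀ x ∈ A, ∀ ε : ι → ℤˣ,
      (fun k ↦ x k + ε k) ∉ A → F t (fun k ↦ x k + ε k) = 0) (hx : x ∈ A) :
    Nat.card {u // IsWalk A E x t u} * c = F t x := by
  induction t generalizing x with
  | zero =>
    by_cases hE : x ∈ E
    · have := subsingleton_isWalk_zero (A := A) (E := E) (x := x)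
      have : Nonempty {u // IsWalk A E x 0 u} :=
        ⟨⟨fun _ ↦ x, rfl, fun _ ↦ hx, by simp, by simp, hE⟩⟩
      rw [Nat.card_unique, hmem x hx hE, Nat.cast_one, one_mul]
    · have : IsEmpty {u // IsWalk A E x 0 u} := ⟨fun u ↦ hE (u.2.zero ▸ u.2.finish)⟩
      rw [Nat.card_of_isEmpty, hnotMem x hx hE, Nat.cast_zero, zero_mul]
  | succ t ih =>
    rw [natCard_isWalk_succ hx, hsucc, Nat.cast_sum, Finset.sum_mul]
    refine Finset.sum_congr rfl fun ε _ ↦ ?_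
    by_cases hε : (fun k ↦ x k + ε k) ∈ A
    · exact ih hε
    · have := isEmpty_isWalk (E := E) (t := t) hε
      rw [Nat.card_of_isEmpty, hexit t x hx ε hε, Nat.cast_zero, zero_mul]

end Walks

section WalkCount

/-- The number of walks of `t` steps `1` or `-1` on `ℤ` with displacement `z`. -/
def walkCount : ℕ → ℤ → ℤ
  | 0, z => if z = 0 then 1 else 0
  | t + 1, z => ∑ ε : ℤˣ, walkCount t (z + ε)

theorem walkCount_neg (t : ℕ) (z : ℤ) : walkCount t (-z) = walkCount t z := by
  induction t generalizing z with
  | zero => simp [walkCount]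
  | succ t ih =>
    refine Fintype.sum_equiv (Equiv.neg ℤˣ) _ _ fun ε ↦ ?_
    rw [← ih]
    simp [add_comm]

theorem det_sum_rows {n E R : Type*} [Fintype n] [DecidableEq n] [Fintype E] [CommRing R]
    (M : n → E → n → R) :
    det (of fun k i ↦ ∑ e, M k e i) = ∑ f : n → E, det (of fun k i ↦ M k (f k) i) := by
  have h := (detRowAlternating (n := n) (R := R)).toMultilinearMap.map_sum fun k e ↦ M k e
  refine Eq.trans (congrArg det ?_) h
  ext k i
  simp

variable {m : ℕ} {x y : Fin m → ℤ} {t : ℕ}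

/-- The positions of `m` vicious walkers: pairwise distinct, and of the same parity so that two
walkers cannot exchange places without meeting. They are listed from the highest to the lowest. -/
def viciousStates (m : ℕ) : Set (Fin m → ℤ) :=
  {x | StrictAnti x ∧ ∀ k l, Even (x k - x l)}

theorem antitone_add_two_mul (hx : x ∈ viciousStates m) : Antitone fun k ↦ x k + 2 * (k : ℤ) := by
  cases m with
  | zero => exact fun k ↦ k.elim0
  | succ m =>
    refine Fin.antitone_iff_succ_le.2 fun k ↦ ?_
    have hlt := hx.1 k.castSucc_lt_succ
    obtain ⟨d, hd⟩ := hx.2 k.castSucc k.succ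
    simp only [Fin.val_castSucc, Fin.val_succ]
    push_cast
    omega

theorem not_injective_of_step_notMem_viciousStates (hx : x ∈ viciousStates m) {ε : Fin m → ℤˣ}
    (hε : (fun k ↦ x k + ε k) ∉ viciousStates m) :
    ¬ Function.Injective fun k ↦ x k + (ε k : ℤ) := by
  have hunit (k : Fin m) : (ε k : ℤ) = 1 ∨ (ε k : ℤ) = -1 := Int.isUnit_iff.1 (ε k).isUnit
  refine fun hinj ↦ hε ⟨Antitone.strictAnti_of_injective (fun k l hkl ↦ ?_) hinj, fun k l ↦ ?_⟩
  · obtain rfl | hlt := hkl.eq_or_lt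
    · exact le_rfl
    · have hgap := hx.1 hlt
      obtain ⟨d, hd⟩ := hx.2 k l
      have := hunit k
      have := hunit l
      omega
  · obtain ⟨d, hd⟩ := hx.2 k l
    rw [Int.even_iff]
    have := hunit k
    have := hunit l
    simp only
    omega

theorem det_walkCount_zero_of_ne (hx : StrictAnti x) (hy : StrictAnti y) (hxy : x ≠ y) :
    det (of fun k i ↦ walkCount 0 (x k - y i)) = 0 := by
  obtain ⟨k, hk⟩ : ∃ k, x k ∉ Set.range y := by
    by_contra! h
    refine hxy ((hx.range_inj hy).1 (Set.eq_of_subset_of_ncard_le (Set.range_subset_iff.2 h) ?_))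
    rw [← Set.image_univ, ← Set.image_univ, Set.ncard_image_of_injective _ hx.injective,
      Set.ncard_image_of_injective _ hy.injective]
  refine det_eq_zero_of_row_eq_zero k fun i ↦ if_neg fun h ↦ hk ⟨i, ?_⟩
  omega

theorem of_walkCount_zero_self (hx : StrictAnti x) :
    (of fun k i ↦ walkCount 0 (x k - x i)) = (1 : Matrix (Fin m) (Fin m) ℤ) := by
  ext k i
  simp [walkCount, one_apply, sub_eq_zero, hx.injective.eq_iff]

theorem natCard_viciousWalk (hx : x ∈ viciousStates m) (hy : StrictAnti y) :
    (Nat.card {u // IsWalk (viciousStates m) {y} x t u} : ℤ)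
      = det (of fun k i ↦ walkCount t (x k - y i)) := by
  rw [← mul_one (Nat.card _ : ℤ)]
  refine natCard_isWalk_mul (F := fun t x ↦ det (of fun k i ↦ walkCount t (x k - y i)))
    (fun x hx hxy ↦ ?_) (fun x hx hxy ↦ det_walkCount_zero_of_ne hx.1 hy hxy) (fun t x ↦ ?_)
    (fun t x hx ε hε ↦ ?_) hx
  · rw [← Set.mem_singleton_iff.1 hxy, of_walkCount_zero_self hx.1, det_one]
  · simp only [walkCount, add_sub_right_comm]
    exact det_sum_rows _
  · obtain ⟨k, l, hkl, hne⟩ :=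
      Function.not_injective_iff.1 (not_injective_of_step_notMem_viciousStates hx hε)
    exact det_zero_of_row_eq hne (funext fun i ↦ by simp only [of_apply] at hkl ⊢; rw [hkl])

/-- The states of vicious walkers staying strictly above the origin. -/
def positiveStates (m : ℕ) : Set (Fin m → ℤ) :=
  {x | x ∈ viciousStates m ∧ ∀ k, 0 < x k}

/-- By the reflection principle, the second term removes the walks which visit the origin. -/
theorem natCard_positiveWalk (hx : x ∈ positiveStates m) (hy : y ∈ positiveStates m) :
    (Nat.card {u // IsWalk (positiveStates m) {y} x t u} : ℤ)
      = det (of fun k i ↦ walkCount t (x k - y i) - walkCount t (x k + y i)) := by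
  have hbase (x) (hx : x ∈ positiveStates m) :
      (of fun k i ↦ walkCount 0 (x k - y i) - walkCount 0 (x k + y i))
        = of fun k i ↦ walkCount 0 (x k - y i) := by
    ext k i
    have : x k + y i ≠ 0 := by have := hx.2 k; have := hy.2 i; omega
    simp [walkCount, this]
  rw [← mul_one (Nat.card _ : ℤ)]
  refine natCard_isWalk_mul
    (F := fun t x ↦ det (of fun k i ↦ walkCount t (x k - y i) - walkCount t (x k + y i)))
    (fun x hx hxy ↦ ?_) (fun x hx hxy ↦ ?_) (fun t x ↦ ?_) (fun t x hx ε hε ↦ ?_) hx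
  · simp only [hbase x hx]
    rw [← Set.mem_singleton_iff.1 hxy, of_walkCount_zero_self hx.1.1, det_one]
  · simp only [hbase x hx]
    exact det_walkCount_zero_of_ne hx.1.1 hy.1.1 hxy
  · simp only [walkCount, add_sub_right_comm _ _ (y _), add_right_comm _ _ (y _),
      ← Finset.sum_sub_distrib]
    exact det_sum_rows fun k ε i ↦
      walkCount t (x k - y i + (ε : ℤˣ)) - walkCount t (x k + y i + (ε : ℤˣ))
  · by_cases hv : (fun k ↦ x k + (ε k : ℤ)) ∈ viciousStates m
    · obtain ⟨k, hk⟩ : ∃ k, x k + (ε k : ℤ) ≤ 0 := by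
        by_contra! h
        exact hε ⟨hv, h⟩
      have hzero : x k + (ε k : ℤ) = 0 := by
        have := hx.2 k
        have := Int.isUnit_iff.1 (ε k).isUnit
        omega
      refine det_eq_zero_of_row_eq_zero k fun i ↦ ?_
      simp only [of_apply, hzero]
      rw [zero_sub, walkCount_neg, zero_add, sub_self]
    · obtain ⟨k, l, hkl, hne⟩ :=
        Function.not_injective_iff.1 (not_injective_of_step_notMem_viciousStates hx.1 hv)
      exact det_zero_of_row_eq hne (funext fun i ↦ by simp only [of_apply] at hkl ⊢; rw [hkl])

/-- The sum, over all pairs of walks of `t` steps of two walkers at displacement `d`, of the sign of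
their final displacement. The Pfaffians of its values count vicious walkers with free end points. -/
def signKernel : ℕ → ℤ → ℤ
  | 0, d => d.sign
  | t + 1, d => ∑ ε : ℤˣ, ∑ ε' : ℤˣ, signKernel t (d + ε' - ε)

theorem signKernel_neg (t : ℕ) (d : ℤ) : signKernel t (-d) = -signKernel t d := by
  induction t generalizing d with
  | zero => simp [signKernel]
  | succ t ih =>
    simp only [signKernel, ← Finset.sum_neg_distrib, ← ih]
    rw [sum_comm]
    refine Finset.sum_congr rfl fun ε _ ↦ Finset.sum_congr rfl fun ε' _ ↦ ?_
    congr 1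
    ring

theorem walkCount_two_mul_succ (t : ℕ) (d : ℤ) :
    walkCount (2 * (t + 1)) d = ∑ ε : ℤˣ, ∑ ε' : ℤˣ, walkCount (2 * t) (d + ε' - ε) := by
  refine Fintype.sum_equiv (Equiv.neg ℤˣ) _ _ fun ε ↦ Finset.sum_congr rfl fun ε' _ ↦ ?_
  congr 1
  simp [add_right_comm]

theorem signKernel_add_two (t : ℕ) {d : ℤ} (hd : Even d) :
    signKernel t (d + 2) - signKernel t d = walkCount (2 * t) d + walkCount (2 * t) (d + 2) := by
  induction t generalizing d with
  | zero =>
    rw [Int.even_iff] at hd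
    obtain h | rfl | rfl | h : d < -2 ∨ d = -2 ∨ d = 0 ∨ 0 < d := by omega
    · simp [signKernel, walkCount, Int.sign_eq_neg_one_of_neg (show d < 0 by omega),
        Int.sign_eq_neg_one_of_neg (show d + 2 < 0 by omega), show d ≠ 0 by omega,
        show d + 2 ≠ 0 by omega]
    · rfl
    · rfl
    · simp [signKernel, walkCount, Int.sign_eq_one_of_pos h,
        Int.sign_eq_one_of_pos (show 0 < d + 2 by omega), h.ne', show d + 2 ≠ 0 by omega]
  | succ t ih =>
    simp only [signKernel, walkCount_two_mul_succ, ← Finset.sum_sub_distrib,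
      ← Finset.sum_add_distrib]
    refine Finset.sum_congr rfl fun ε _ ↦ Finset.sum_congr rfl fun ε' _ ↦ ?_
    have heven : Even (d + ε' - ε) := by
      rw [Int.even_iff] at hd ⊢
      have := Int.isUnit_iff.1 ε.isUnit
      have := Int.isUnit_iff.1 ε'.isUnit
      omega
    rw [show d + 2 + ε' - ε = d + ε' - ε + 2 by ring, ih heven]

theorem sign_sub_of_strictAnti (hx : StrictAnti x) (k l : Fin m) :
    (x k - x l).sign = ((l : ℤ) - k).sign := by
  rcases lt_trichotomy k l with h | rfl | h
  · rw [Int.sign_eq_one_of_pos (by have := hx h; omega), Int.sign_eq_one_of_pos (by omega)]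
  · simp
  · rw [Int.sign_eq_neg_one_of_neg (by have := hx h; omega),
      Int.sign_eq_neg_one_of_neg (by omega)]

/-- The factor at time `0` depends only on the order of the walkers, hence is the same at all their
end points. -/
theorem natCard_freeWalk {κ : Type*} [Fintype κ] [DecidableEq κ] (e : κ ⊕ κ ≃ Fin m)
    (hx : x ∈ viciousStates m) :
    Nat.card {u // IsWalk (viciousStates m) Set.univ x t u} *
        pfaffianSum (of fun p q ↦ signKernel 0 (x (e q) - x (e p)))
      = pfaffianSum (of fun p q ↦ signKernel t (x (e q) - x (e p))) := by
  refine natCard_isWalk_mul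
    (F := fun t y ↦ pfaffianSum (of fun p q ↦ signKernel t (y (e q) - y (e p))))
    (fun y hy _ ↦ ?_) (fun _ _ h ↦ (h trivial).elim) (fun t y ↦ ?_) (fun t y hy ε hε ↦ ?_) hx
  · congr 1
    ext p q
    simp only [of_apply, signKernel, sign_sub_of_strictAnti hy.1, sign_sub_of_strictAnti hx.1]
  · simp only [signKernel]
    rw [pfaffianSum_sum_sum fun p q ε ε' ↦ signKernel t (y (e q) - y (e p) + (ε' : ℤˣ) - (ε : ℤˣ))]
    refine Fintype.sum_equiv (e.arrowCongr (Equiv.refl _)) _ _ fun f ↦ ?_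
    congr 1
    ext p q
    simp only [of_apply, arrowCongr_apply, coe_refl, Function.comp_apply, id_eq, symm_apply_apply]
    congr 1
    ring
  · have hinj := not_injective_of_step_notMem_viciousStates hy hε
    exact pfaffianSum_submatrix_eq_zero (of fun i j : ℤ ↦ signKernel t (j - i))
      (mt (fun h ↦ h.of_comp_right e.surjective) hinj)

end WalkCount

section Packed

/-- The most tightly packed state of `c` vicious walkers that is symmetric about the origin. -/
def packed (c : ℕ) (k : Fin c) : ℤ := c - 1 - 2 * k

/-- The identification of the walkers of a symmetric state with two copies of its positive half:
the right copy of `k` is the mirror image of the left copy. -/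
def foldEquiv (b : ℕ) : Fin b ⊕ Fin b ≃ Fin (2 * b) :=
  ((Equiv.refl _).sumCongr Fin.revPerm).trans (finSumFinEquiv.trans (finCongr (two_mul b).symm))

/-- The positive half of `packed (2 * b)`. -/
def halfPacked (b : ℕ) (k : Fin b) : ℤ := 2 * b - 1 - 2 * k

/-- The state symmetric about the origin whose positive half is `y`. -/
def mirror {b : ℕ} (y : Fin b → ℤ) (k : Fin (2 * b)) : ℤ :=
  Sum.elim y (-y) ((foldEquiv b).symm k)

variable {b : ℕ}

@[simp]
theorem val_foldEquiv_inl (k : Fin b) : (foldEquiv b (.inl k) : ℕ) = k := by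
  simp [foldEquiv]

theorem foldEquiv_inr (k : Fin b) : foldEquiv b (.inr k) = (foldEquiv b (.inl k)).rev := by
  ext
  simp only [foldEquiv, trans_apply, sumCongr_apply, Sum.map_inl, Sum.map_inr,
    finSumFinEquiv_apply_left, finSumFinEquiv_apply_right, finCongr_apply, Fin.val_cast,
    Fin.val_natAdd, Fin.val_castAdd, Fin.revPerm_apply, coe_refl, id_eq, Fin.val_rev]
  omega

@[simp]
theorem mirror_foldEquiv (y : Fin b → ℤ) (p : Fin b ⊕ Fin b) :
    mirror y (foldEquiv b p) = Sum.elim y (-y) p := by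
  simp [mirror]

theorem mirror_halfPacked : mirror (halfPacked b) = packed (2 * b) := by
  refine (foldEquiv b).surjective.injective_comp_right (funext ?_)
  rintro (k | k)
  · simp [packed, halfPacked]
  · change mirror _ (foldEquiv b (.inr k)) = packed _ (foldEquiv b (.inr k))
    rw [mirror_foldEquiv, foldEquiv_inr]
    simp only [Sum.elim_inr, Pi.neg_apply, packed, halfPacked, Fin.val_rev, val_foldEquiv_inl]
    omega

theorem packed_mem_viciousStates (c : ℕ) : packed c ∈ viciousStates c := by
  refine ⟨fun k l hkl ↦ ?_, fun k l ↦ ⟨l - k, ?_⟩⟩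
  · simp only [packed]
    omega
  · simp only [packed]
    ring

theorem halfPacked_mem_positiveStates (b : ℕ) : halfPacked b ∈ positiveStates b := by
  refine ⟨⟨fun k l hkl ↦ ?_, fun k l ↦ ⟨l - k, ?_⟩⟩, fun k ↦ ?_⟩ <;> simp only [halfPacked]
  · omega
  · ring
  · omega

section Determinants

variable {R : Type*} [CommRing R]

theorem det_sub_mirror {f : ℤ → R} (hf : f.Even) (y : Fin b → ℤ) :
    det (of fun k l ↦ f (mirror y k - mirror y l))
      = det (of fun i j ↦ f (y i - y j) + f (y i + y j)) *
        det (of fun i j ↦ f (y i - y j) - f (y i + y j)) := by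
  have hblock : (of fun k l ↦ f (mirror y k - mirror y l)).submatrix (foldEquiv b) (foldEquiv b)
      = fromBlocks (of fun i j ↦ f (y i - y j)) (of fun i j ↦ f (y i + y j))
          (of fun i j ↦ f (y i + y j)) (of fun i j ↦ f (y i - y j)) := by
    ext (i | i) (j | j)
    · simp
    · simp
    · simp [← hf (y i + y j), neg_add_eq_sub]
    · simp [← hf (y i - y j), neg_add_eq_sub]
  rw [← det_submatrix_equiv_self (foldEquiv b), hblock, det_fromBlocks_swap_symmetric]
  rfl

theorem det_mul_pfaffianSum_mirror {g : ℤ → R} (hg : g.Odd) (y : Fin b → ℤ) :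
    det (fromBlocks 1 1 1 (-1) : Matrix (Fin b ⊕ Fin b) (Fin b ⊕ Fin b) R) *
        pfaffianSum (of fun p q ↦ g (mirror y (foldEquiv b q) - mirror y (foldEquiv b p)))
      = 2 ^ b * b.factorial * 2 ^ b * det (of fun i j ↦ g (y j - y i) + g (y j + y i)) := by
  set T : Matrix (Fin b) (Fin b) R := of fun i j ↦ g (y j - y i) with hT
  set H : Matrix (Fin b) (Fin b) R := of fun i j ↦ g (y j + y i) with hH
  have hTt : Tᵀ = -T := by
    ext i j
    simp [hT, ← hg (y j - y i)]
  have hHt : Hᵀ = H := by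
    ext i j
    simp [hH, add_comm]
  have hblock : (of fun p q ↦ g (mirror y (foldEquiv b q) - mirror y (foldEquiv b p)))
      = fromBlocks T (-H) H (-T) := by
    ext (i | i) (j | j)
    · simp [hT]
    · simp [hH, ← hg (y j + y i), neg_add_eq_sub]
    · simp [hH]
    · simp [hT, ← hg (y j - y i), neg_add_eq_sub]
  have hcongr : fromBlocks 1 1 1 (-1) * fromBlocks T (-H) H (-T) * (fromBlocks 1 1 1 (-1))ᵀ
      = fromBlocks 0 ((2 : R) • (T + H)) (-((2 : R) • (T + H))ᵀ) 0 := by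
    simp only [fromBlocks_transpose, fromBlocks_multiply, transpose_add, hTt, hHt,
      transpose_one, transpose_neg, one_mul, mul_one, neg_mul, mul_neg, two_smul]
    congr 1 <;> abel
  rw [hblock, ← pfaffianSum_mul_mul_transpose, hcongr, pfaffianSum_fromBlocks_neg_transpose,
    det_smul, Fintype.card_fin, mul_assoc _ (2 ^ b)]
  rfl

theorem det_eq_of_forall_col_sub_eq_add {n : ℕ} {A B : Matrix (Fin (n + 1)) (Fin (n + 1)) R}
    (hzero : ∀ i, A i 0 = B i 0)
    (hsucc : ∀ i j, A i (Fin.succ j) - A i j.castSucc = B i j.succ + B i j.castSucc) :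
    A.det = B.det := by
  let C : Matrix (Fin (n + 1)) (Fin (n + 1)) R :=
    of fun i ↦ Fin.cons (A i 0) fun j ↦ A i j.succ - A i j.castSucc
  have hA : A.det = C.det :=
    det_eq_of_forall_col_eq_smul_add_pred 1 (fun i ↦ rfl) fun i j ↦ by simp [C]
  have hB : B.det = C.det :=
    det_eq_of_forall_col_eq_smul_add_pred (-1) (fun i ↦ (hzero i).symm)
      fun i j ↦ by simp [C, hsucc]
  rw [hA, hB]

end Determinants

theorem det_signKernel_halfPacked (t b : ℕ) :
    det (of fun i j ↦ signKernel t (halfPacked b j - halfPacked b i)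
        + signKernel t (halfPacked b j + halfPacked b i))
      = det (of fun i j ↦ walkCount (2 * t) (halfPacked b i - halfPacked b j)
        + walkCount (2 * t) (halfPacked b i + halfPacked b j)) := by
  cases b with
  | zero => simp
  | succ n =>
    have hrev (k : Fin (n + 1)) : halfPacked (n + 1) k.rev = 2 * k + 1 := by
      simp only [halfPacked, Fin.val_rev]
      omega
    rw [← det_submatrix_equiv_self Fin.revPerm, ← det_submatrix_equiv_self Fin.revPerm (of _)]
    refine det_eq_of_forall_col_sub_eq_add (fun i ↦ ?_) fun i j ↦ ?_ <;>
      simp only [submatrix_apply, of_apply, Fin.revPerm_apply, hrev, Fin.val_zero, Fin.val_succ,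
        Fin.val_castSucc]
    · have h := signKernel_add_two t (even_two_mul (i : ℤ))
      have hneg := signKernel_neg t (2 * i)
      ring_nf at h hneg ⊢
      linarith
    · have hsub := signKernel_add_two t (even_two_mul (j - i : ℤ))
      have hadd := signKernel_add_two t (even_two_mul (j + i + 1 : ℤ))
      have hneg := walkCount_neg (2 * t) (2 * (j - i))
      have hneg' := walkCount_neg (2 * t) (2 * (j - i) + 2)
      push_cast
      ring_nf at hsub hadd hneg hneg' ⊢
      linarith

theorem natCard_freeWalk_packed (t b : ℕ) :
    (Nat.card {u // IsWalk (viciousStates (2 * b)) Set.univ (packed (2 * b)) t u} : ℤ)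
      = det (of fun i j ↦ walkCount (2 * t) (halfPacked b i - halfPacked b j)
        + walkCount (2 * t) (halfPacked b i + halfPacked b j)) := by
  have hpf (s : ℕ) := det_mul_pfaffianSum_mirror (signKernel_neg s) (halfPacked b)
  simp only [mirror_halfPacked, det_signKernel_halfPacked] at hpf
  have hone : (of fun i j ↦ walkCount (2 * 0) (halfPacked b i - halfPacked b j)
      + walkCount (2 * 0) (halfPacked b i + halfPacked b j)) = 1 := by
    rw [← of_walkCount_zero_self (halfPacked_mem_positiveStates b).1.1]
    ext i j
    have hi := (halfPacked_mem_positiveStates b).2 i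
    have hj := (halfPacked_mem_positiveStates b).2 j
    simp [walkCount, show halfPacked b i + halfPacked b j ≠ 0 by omega]
  have hcard := natCard_freeWalk (t := t) (foldEquiv b) (packed_mem_viciousStates (2 * b))
  have hne : (2 ^ b * b.factorial * 2 ^ b : ℤ) ≠ 0 := by positivity
  refine mul_left_cancel₀ hne ?_
  rw [← hpf t, ← hcard, mul_left_comm, hpf 0, hone, det_one]
  ring

end Packed

section WalkGeometry

variable {ι : Type*} {A E : Set (ι → ℤ)} {x : ι → ℤ} {t : ℕ} {u : ℕ → ι → ℤ}

theorem IsWalk.natAbs_sub_le (hu : IsWalk A E x t u) (s s' : ℕ) (k : ι) :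
    (u s' k - u s k).natAbs ≤ ((s' : ℤ) - s).natAbs := by
  wlog h : s ≤ s' generalizing s s'
  · have := this s' s (by omega)
    omega
  induction s', h using Nat.le_induction with
  | base => simp
  | succ s' h ih =>
    rcases lt_or_ge s' t with hs | hs
    · have := hu.step s' hs k
      omega
    · rw [hu.const _ hs] at ih
      rw [hu.const _ (by omega : t ≤ s' + 1)]
      omega

theorem IsWalk.even_sub (hu : IsWalk A E x t u) {s : ℕ} (h : s ≤ t) (k : ι) :
    Even (u s k - x k - s) := by
  induction s with
  | zero => simp [hu.zero]
  | succ s ih =>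
    have := hu.step s h k
    have := Int.even_iff.1 (ih (by omega))
    rw [Int.even_iff]
    push_cast
    omega

theorem IsWalk.reverse {y : ι → ℤ} (hu : IsWalk A {y} x t u) :
    IsWalk A {x} y t (fun s ↦ u (t - s)) where
  zero := hu.finish
  mem s := hu.mem _
  step s hs k := by
    have := hu.step (t - (s + 1)) (by omega) k
    rw [show t - (s + 1) + 1 = t - s by omega] at this
    omega
  const s hs := by simp only [Nat.sub_eq_zero_of_le hs, Nat.sub_self]
  finish := by simp [hu.zero]

theorem IsWalk.take (hu : IsWalk A E x t u) {t' : ℕ} (h : t' ≤ t) :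
    IsWalk A Set.univ x t' (fun s ↦ u (min s t')) where
  zero := by simpa using hu.zero
  mem s := hu.mem _
  step s hs k := by
    simp only [min_eq_left hs.le, min_eq_left (Nat.succ_le_of_lt hs)]
    exact hu.step s (by omega) k
  const s hs := by simp [hs]
  finish := trivial

theorem IsWalk.palindrome (hu : IsWalk A E x t u) :
    IsWalk A {x} x (2 * t) (fun s ↦ u (min s (2 * t - s))) where
  zero := by simpa using hu.zero
  mem s := hu.mem _
  step s hs k := by
    rcases lt_or_ge s t with h | h
    · rw [min_eq_left (by omega), min_eq_left (by omega)]
      exact hu.step s h k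
    · have hstep := hu.step (2 * t - (s + 1)) (by omega) k
      rw [show 2 * t - (s + 1) + 1 = 2 * t - s by omega] at hstep
      rw [min_eq_right (by omega), min_eq_right (by omega)]
      omega
  const s hs := by simp [Nat.sub_eq_zero_of_le hs]
  finish := by simp [hu.zero]

theorem bijOn_palindromic_freeWalk (A : Set (ι → ℤ)) (x : ι → ℤ) (t : ℕ) :
    Set.BijOn (fun u s ↦ u (min s t))
      ({u | IsWalk A {x} x (2 * t) u} ∩ {u | (fun s ↦ u (2 * t - s)) = u})
      {u | IsWalk A Set.univ x t u} := by
  refine Set.InvOn.bijOn (f' := fun u s ↦ u (min s (2 * t - s))) ⟨?_, ?_⟩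
    (fun u hu ↦ hu.1.take (by omega)) fun u hu ↦ ⟨hu.palindrome, ?_⟩
  · rintro u ⟨-, hpal⟩
    funext s
    rcases le_total s t with hs | hs
    · exact congrArg u (by omega)
    · exact (congrArg u (by omega)).trans (congrFun hpal s)
  · rintro u (hu : IsWalk A Set.univ x t u)
    funext s
    rcases le_total s t with hs | hs
    · exact congrArg u (by omega)
    · exact (congrArg u (by omega)).trans (hu.const s hs).symm
  · exact funext fun s ↦ congrArg u (by omega)

end WalkGeometry

section Mirror

variable {b : ℕ} {y : Fin b → ℤ}

theorem mirror_mem_viciousStates_iff : mirror y ∈ viciousStates (2 * b) ↔ y ∈ positiveStates b := by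
  have hval (i : Fin b) : ((foldEquiv b (.inr i) : Fin (2 * b)) : ℕ) = 2 * b - 1 - i := by
    rw [foldEquiv_inr, Fin.val_rev, val_foldEquiv_inl]
    omega
  constructor
  · rintro ⟨hanti, heven⟩
    refine ⟨⟨fun i j hij ↦ ?_, fun i j ↦ ?_⟩, fun i ↦ ?_⟩
    · simpa using @hanti (foldEquiv b (.inl i)) (foldEquiv b (.inl j))
        (by simpa only [Fin.lt_def, val_foldEquiv_inl] using hij)
    · simpa using heven (foldEquiv b (.inl i)) (foldEquiv b (.inl j))
    · have := @hanti (foldEquiv b (.inl i)) (foldEquiv b (.inr i))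
        (by rw [Fin.lt_def, hval, val_foldEquiv_inl]; omega)
      simp only [mirror_foldEquiv, Sum.elim_inl, Sum.elim_inr, Pi.neg_apply] at this
      omega
  · rintro ⟨⟨hanti, heven⟩, hpos⟩
    refine ⟨fun p q hpq ↦ ?_, fun p q ↦ ?_⟩
    all_goals
      obtain ⟨p, rfl⟩ := (foldEquiv b).surjective p
      obtain ⟨q, rfl⟩ := (foldEquiv b).surjective q
    · rcases p with i | i <;> rcases q with j | j <;>
        simp only [mirror_foldEquiv, Sum.elim_inl, Sum.elim_inr, Pi.neg_apply, Fin.lt_def, hval,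
          val_foldEquiv_inl] at hpq ⊢
      · exact hanti hpq
      · have := hpos i
        have := hpos j
        omega
      · omega
      · exact neg_lt_neg (hanti (by rw [Fin.lt_def]; omega))
    · rcases p with i | i <;> rcases q with j | j <;>
        simp only [mirror_foldEquiv, Sum.elim_inl, Sum.elim_inr, Pi.neg_apply] <;>
        have := heven i j <;> rw [Int.even_iff] at this ⊢ <;> omega

/-- The positive half of a state of `2 * b` walkers that is symmetric about the origin. -/
def upperHalf (x : Fin (2 * b) → ℤ) (k : Fin b) : ℤ := x (foldEquiv b (.inl k))

@[simp]
theorem upperHalf_mirror (y : Fin b → ℤ) : upperHalf (mirror y) = y := by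
  funext k
  simp [upperHalf]

theorem mirror_upperHalf {x : Fin (2 * b) → ℤ} (hx : (fun k ↦ -x k.rev) = x) :
    mirror (upperHalf x) = x := by
  funext k
  obtain ⟨k | k, rfl⟩ := (foldEquiv b).surjective k
  · simp [upperHalf]
  · rw [← congrFun hx, foldEquiv_inr, Fin.rev_rev, ← foldEquiv_inr, mirror_foldEquiv]
    rfl

theorem neg_mirror_rev (y : Fin b → ℤ) : (fun k ↦ -mirror y k.rev) = mirror y := by
  funext k
  obtain ⟨k | k, rfl⟩ := (foldEquiv b).surjective k
  · rw [← foldEquiv_inr]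
    simp
  · rw [foldEquiv_inr, Fin.rev_rev, ← foldEquiv_inr]
    simp

theorem IsWalk.upperHalf {z : Fin b → ℤ} {t : ℕ} {u : ℕ → Fin (2 * b) → ℤ}
    (hu : IsWalk (viciousStates (2 * b)) {mirror z} (mirror y) t u)
    (hsymm : ∀ s, (fun k ↦ -u s k.rev) = u s) :
    IsWalk (positiveStates b) {z} y t (fun s ↦ upperHalf (u s)) where
  zero := by rw [hu.zero, upperHalf_mirror]
  mem s := mirror_mem_viciousStates_iff.1 (by rw [mirror_upperHalf (hsymm s)]; exact hu.mem s)
  step s hs k := hu.step s hs _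
  const s hs := by rw [hu.const s hs]
  finish := by rw [Set.mem_singleton_iff.1 hu.finish, upperHalf_mirror, Set.mem_singleton_iff]

theorem IsWalk.mirror {z : Fin b → ℤ} {t : ℕ} {w : ℕ → Fin b → ℤ}
    (hw : IsWalk (positiveStates b) {z} y t w) :
    IsWalk (viciousStates (2 * b)) {mirror z} (mirror y) t (fun s ↦ mirror (w s)) where
  zero := by rw [hw.zero]
  mem s := mirror_mem_viciousStates_iff.2 (hw.mem s)
  step s hs k := by
    obtain ⟨k | k, rfl⟩ := (foldEquiv b).surjective k <;>
      have := hw.step s hs k <;>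
      simp only [mirror_foldEquiv, Sum.elim_inl, Sum.elim_inr, Pi.neg_apply] <;> omega
  const s hs := by rw [hw.const s hs]
  finish := by rw [Set.mem_singleton_iff.1 hw.finish, Set.mem_singleton_iff]

theorem bijOn_symmetric_positiveWalk (y z : Fin b → ℤ) (t : ℕ) :
    Set.BijOn (fun u s ↦ upperHalf (u s))
      ({u | IsWalk (viciousStates (2 * b)) {mirror z} (mirror y) t u} ∩
        {u | (fun s k ↦ -u s (Fin.rev k)) = u})
      {w | IsWalk (positiveStates b) {z} y t w} :=
  Set.InvOn.bijOn (f' := fun w s ↦ mirror (w s))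
    ⟨fun _ hu ↦ funext fun s ↦ mirror_upperHalf (congrFun hu.2 s),
      fun w _ ↦ funext fun s ↦ upperHalf_mirror (w s)⟩
    (fun _ hu ↦ hu.1.upperHalf (congrFun hu.2))
    fun w hw ↦ ⟨hw.mirror, funext fun s ↦ neg_mirror_rev (w s)⟩

end Mirror

section LowerSets

variable {a b c : ℕ}

/-- The walks describing the plane partitions in an `a × b × c` box. The walker `k` follows the
boundary of the `k`-th layer, going up for each step in the first direction and down for each step
in the second one; shifting the layers relative to each other makes the walkers vicious. -/
def boundaryWalks (a b c : ℕ) : Set (ℕ → Fin c → ℤ) :=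
  {u | IsWalk (viciousStates c) {fun k ↦ packed c k + (a - b)} (packed c) (a + b) u}

/-- The plane partition in an `a × b × c` box whose layers have the boundaries recorded by `u`:
the cell `(i, j)` is compared with the boundary on its diagonal, which is reached at time
`b + i - j`. -/
def belowWalk (a b : ℕ) (u : ℕ → Fin c → ℤ) : Set (Fin a × Fin b × Fin c) :=
  {x | (x.1 : ℤ) + x.2.1 < b + (u (b + x.1 - x.2.1) x.2.2 - packed c x.2.2)}

theorem isLowerSet_belowWalk {u : ℕ → Fin c → ℤ} (hu : u ∈ boundaryWalks a b c) :
    IsLowerSet (belowWalk a b u) := by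
  rintro ⟨i, j, k⟩ ⟨i', j', k'⟩ ⟨hi, hj, hk⟩ h
  have hgap := antitone_add_two_mul (hu.mem (b + i - j)) hk
  have hdist := hu.natAbs_sub_le (b + i - j) (b + i' - j') k'
  rw [Fin.le_def] at hi hj
  simp only [belowWalk, packed, Set.mem_ofPred_eq] at hi hj hgap h ⊢
  omega

theorem exists_eq_packed_add_two_mul_sub {u : ℕ → Fin c → ℤ} (hu : u ∈ boundaryWalks a b c)
    {s : ℕ} (hs : s ≤ a + b) (k : Fin c) :
    ∃ h : ℤ, u s k = packed c k + 2 * h - s ∧ 0 ≤ h ∧ h ≤ s ∧ h ≤ a ∧ s ≤ b + h := by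
  have hstart := hu.natAbs_sub_le 0 s k
  have hfinish := hu.natAbs_sub_le s (a + b) k
  rw [hu.zero] at hstart
  rw [Set.mem_singleton_iff.1 hu.finish] at hfinish
  push_cast at hfinish
  obtain ⟨q, hq⟩ := hu.even_sub hs k
  exact ⟨q + s, by omega, by omega, by omega, by omega, by omega⟩

theorem le_of_belowWalk_subset {u w : ℕ → Fin c → ℤ} (hu : u ∈ boundaryWalks a b c)
    (hw : w ∈ boundaryWalks a b c) (h : belowWalk a b u ⊆ belowWalk a b w) : u ≤ w := by
  refine Pi.le_def.2 fun s ↦ Pi.le_def.2 fun k ↦ ?_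
  rcases le_total (a + b) s with hs | hs
  · rw [hu.const s hs, hw.const s hs, Set.mem_singleton_iff.1 hu.finish,
      Set.mem_singleton_iff.1 hw.finish]
  obtain ⟨p, hp, -, hps, hpa, -⟩ := exists_eq_packed_add_two_mul_sub hu hs k
  obtain ⟨q, hq, hq0, -, -, hbq⟩ := exists_eq_packed_add_two_mul_sub hw hs k
  by_contra! hlt
  -- The boundary of `w` on the diagonal reached at time `s` is the cell `(q, b + q - s)`.
  obtain ⟨i, rfl⟩ := Int.eq_ofNat_of_zero_le hq0
  have hmem : ((⟨i, by omega⟩, ⟨b + i - s, by omega⟩, k) : Fin a × Fin b × Fin c) ∈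
      belowWalk a b u := by
    simp only [belowWalk, Set.mem_ofPred_eq, show b + i - (b + i - s) = s by omega]
    omega
  have hmem' := h hmem
  simp only [belowWalk, Set.mem_ofPred_eq, show b + i - (b + i - s) = s by omega] at hmem'
  omega

theorem injOn_belowWalk : Set.InjOn (belowWalk a b) (boundaryWalks a b c) :=
  fun _ hu _ hw h ↦ le_antisymm (le_of_belowWalk_subset hu hw h.subset)
    (le_of_belowWalk_subset hw hu h.superset)

/-- The `k`-th layer of `T`, extended to a lower set of `ℤ × ℤ` with the negative cells. -/
def extendedLayer (T : Set (Fin a × Fin b × Fin c)) (k : Fin c) : Set (ℤ × ℤ) :=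
  {p | p.1 < 0 ∨ p.2 < 0 ∨ ∃ i j, p.1 ≤ i.val ∧ p.2 ≤ j.val ∧ (i, j, k) ∈ T}

theorem isLowerSet_extendedLayer (T : Set (Fin a × Fin b × Fin c)) (k : Fin c) :
    IsLowerSet (extendedLayer T k) := by
  rintro ⟨i, j⟩ ⟨i', j'⟩ ⟨hi, hj⟩ h
  simp only [extendedLayer, Set.mem_ofPred_eq] at hi hj h ⊢
  obtain h | h | ⟨p, q, hp, hq, h⟩ := h
  · exact .inl (by omega)
  · exact .inr (.inl (by omega))
  · exact .inr (.inr ⟨p, q, by omega, by omega, h⟩)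

theorem mem_extendedLayer_iff {T : Set (Fin a × Fin b × Fin c)} (hT : IsLowerSet T)
    {i : Fin a} {j : Fin b} {k : Fin c} :
    ((i : ℤ), (j : ℤ)) ∈ extendedLayer T k ↔ (i, j, k) ∈ T := by
  refine ⟨fun h ↦ ?_, fun h ↦ .inr (.inr ⟨i, j, le_rfl, le_rfl, h⟩)⟩
  obtain h | h | ⟨p, q, hp, hq, h⟩ := h
  · omega
  · omega
  · have hle : (i, j, k) ≤ (p, q, k) :=
      ⟨Fin.le_def.2 (by simpa using hp), Fin.le_def.2 (by simpa using hq), le_rfl⟩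
    exact hT hle h

theorem antitone_extendedLayer {T : Set (Fin a × Fin b × Fin c)} (hT : IsLowerSet T) :
    Antitone (extendedLayer T) := by
  rintro k l hkl p (h | h | ⟨i, j, hi, hj, h⟩)
  · exact .inl h
  · exact .inr (.inl h)
  · have hle : (i, j, k) ≤ (i, j, l) := ⟨le_rfl, le_rfl, hkl⟩
    exact .inr (.inr ⟨i, j, hi, hj, hT hle h⟩)

theorem exists_diagonal_mem_extendedLayer_iff (T : Set (Fin a × Fin b × Fin c)) (s : ℕ)
    (k : Fin c) : ∃ h : ℤ, ∀ i : ℤ, (i, i + b - s) ∈ extendedLayer T k ↔ i < h := by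
  have hbdd (i : ℤ) (hi : (i, i + b - s) ∈ extendedLayer T k) : i ≤ a + s := by
    simp only [extendedLayer, Set.mem_ofPred_eq] at hi
    obtain h | h | ⟨p, -, hp, -⟩ := hi <;> omega
  obtain ⟨h, hmem, hmax⟩ := Int.exists_greatest_of_bdd ⟨a + s, hbdd⟩ ⟨-1, .inl (by simp)⟩
  refine ⟨h + 1, fun i ↦ ⟨fun hi ↦ Int.lt_add_one_of_le (hmax i hi), fun hi ↦ ?_⟩⟩
  exact isLowerSet_extendedLayer T k ⟨by simp only; omega, by simp only; omega⟩ hmem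

/-- The first coordinate at which the diagonal reached at time `s` leaves the `k`-th layer of `T`.
-/
noncomputable def layerCut (T : Set (Fin a × Fin b × Fin c)) (s : ℕ) (k : Fin c) : ℤ :=
  (exists_diagonal_mem_extendedLayer_iff T s k).choose

theorem lt_layerCut_iff {T : Set (Fin a × Fin b × Fin c)} {s : ℕ} {k : Fin c} {i : ℤ} :
    i < layerCut T s k ↔ (i, i + b - s) ∈ extendedLayer T k :=
  ((exists_diagonal_mem_extendedLayer_iff T s k).choose_spec i).symm

theorem layerCut_zero (T : Set (Fin a × Fin b × Fin c)) (k : Fin c) : layerCut T 0 k = 0 := by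
  refine eq_of_forall_lt_iff fun i ↦ lt_layerCut_iff.trans ⟨?_, .inl⟩
  rintro (h | h | ⟨-, q, -, hq, -⟩)
  · exact h
  · simp only at h
    omega
  · simp only at hq
    omega

theorem layerCut_add (T : Set (Fin a × Fin b × Fin c)) (k : Fin c) :
    layerCut T (a + b) k = a := by
  refine eq_of_forall_lt_iff fun i ↦ lt_layerCut_iff.trans ⟨?_, fun h ↦ .inr (.inl ?_)⟩
  · rintro (h | h | ⟨p, -, hp, -⟩)
    · simp only at h
      omega
    · push_cast at h
      omega
    · simp only at hp
      omega
  · push_cast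
    omega

theorem layerCut_le_succ (T : Set (Fin a × Fin b × Fin c)) (s : ℕ) (k : Fin c) :
    layerCut T s k ≤ layerCut T (s + 1) k := by
  refine le_of_forall_lt fun i hi ↦ lt_layerCut_iff.2 ?_
  refine isLowerSet_extendedLayer T k ?_ (lt_layerCut_iff.1 hi)
  exact ⟨le_rfl, by push_cast; omega⟩

theorem layerCut_succ_le (T : Set (Fin a × Fin b × Fin c)) (s : ℕ) (k : Fin c) :
    layerCut T (s + 1) k ≤ layerCut T s k + 1 := by
  refine le_of_forall_lt fun i hi ↦ Int.lt_add_of_sub_right_lt <| lt_layerCut_iff.2 ?_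
  refine isLowerSet_extendedLayer T k ?_ (lt_layerCut_iff.1 hi)
  exact ⟨by simp only; omega, by push_cast; omega⟩

theorem antitone_layerCut {T : Set (Fin a × Fin b × Fin c)} (hT : IsLowerSet T) (s : ℕ) :
    Antitone (layerCut T s) :=
  fun _ _ hkl ↦ le_of_forall_lt fun _ hi ↦ lt_layerCut_iff.2 <|
    antitone_extendedLayer hT hkl (lt_layerCut_iff.1 hi)

/-- The walk along the boundaries of the layers of `T`. -/
noncomputable def boundaryWalk (T : Set (Fin a × Fin b × Fin c)) (s : ℕ) (k : Fin c) : ℤ :=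
  packed c k + 2 * layerCut T (min s (a + b)) k - (min s (a + b) : ℕ)

theorem boundaryWalk_mem_boundaryWalks {T : Set (Fin a × Fin b × Fin c)} (hT : IsLowerSet T) :
    boundaryWalk T ∈ boundaryWalks a b c where
  zero := by
    funext k
    simp [boundaryWalk, layerCut_zero]
  mem s := by
    refine ⟨fun k l hkl ↦ ?_, fun k l ↦ ?_⟩
    · have := antitone_layerCut hT (min s (a + b)) hkl.le
      have := (packed_mem_viciousStates c).1 hkl
      simp only [boundaryWalk]
      omega
    · have := (packed_mem_viciousStates c).2 k l
      rw [Int.even_iff] at this ⊢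
      simp only [boundaryWalk]
      omega
  step s hs k := by
    have := layerCut_le_succ T s k
    have := layerCut_succ_le T s k
    simp only [boundaryWalk, min_eq_left hs.le, min_eq_left (show s + 1 ≤ a + b from hs)]
    omega
  const s hs := by
    funext k
    simp [boundaryWalk, hs]
  finish := by
    rw [Set.mem_singleton_iff]
    funext k
    simp only [boundaryWalk, min_self, layerCut_add]
    push_cast
    ring

theorem belowWalk_boundaryWalk {T : Set (Fin a × Fin b × Fin c)} (hT : IsLowerSet T) :
    belowWalk a b (boundaryWalk T) = T := by
  ext ⟨i, j, k⟩
  have hs : b + (i : ℕ) - j ≤ a + b := by omega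
  have hdiag : (i : ℤ) + b - (b + i - j : ℕ) = j := by omega
  rw [← mem_extendedLayer_iff hT, ← hdiag, ← lt_layerCut_iff]
  simp only [belowWalk, boundaryWalk, min_eq_left hs, Set.mem_ofPred_eq]
  omega

theorem bijOn_belowWalk :
    Set.BijOn (belowWalk a b) (boundaryWalks a b c) {T | IsLowerSet T} :=
  ⟨fun _ ↦ isLowerSet_belowWalk, injOn_belowWalk,
    fun T hT ↦ ⟨boundaryWalk T, boundaryWalk_mem_boundaryWalks hT, belowWalk_boundaryWalk hT⟩⟩

end LowerSets

section Symmetries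

theorem bijOn_fixedPoints {α β : Type*} {f : α → β} {s : Set α} {t : Set β} {σ : α → α}
    {τ : β → β} (hf : Set.BijOn f s t) (hσ : Set.MapsTo σ s s) (hστ : ∀ x ∈ s, f (σ x) = τ (f x)) :
    Set.BijOn f (s ∩ {x | σ x = x}) (t ∩ {y | τ y = y}) := by
  refine ⟨fun x hx ↦ ⟨hf.mapsTo hx.1, ?_⟩, hf.injOn.mono Set.inter_subset_left, ?_⟩
  · exact (hστ x hx.1).symm.trans (congrArg f hx.2)
  · rintro y ⟨hy, hfix⟩
    obtain ⟨x, hx, rfl⟩ := hf.surjOn hy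
    exact ⟨x, ⟨hx, hf.injOn (hσ hx) hx ((hστ x hx).trans hfix)⟩, rfl⟩

variable {a c : ℕ} {u : ℕ → Fin c → ℤ}

theorem boundaryWalks_self (a c : ℕ) :
    boundaryWalks a a c =
      {u | IsWalk (viciousStates c) {packed c} (packed c) (2 * a) u} := by
  simp only [boundaryWalks, sub_self, add_zero, two_mul]

theorem reverse_mem_boundaryWalks (hu : u ∈ boundaryWalks a a c) :
    (fun s ↦ u (2 * a - s)) ∈ boundaryWalks a a c := by
  rw [boundaryWalks_self] at hu ⊢
  exact IsWalk.reverse hu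

theorem belowWalk_reverse (u : ℕ → Fin c → ℤ) :
    belowWalk a a (fun s ↦ u (2 * a - s)) = ppTranspose (belowWalk a a u) := by
  ext ⟨i, j, k⟩
  have hs : 2 * a - (a + (i : ℕ) - j) = a + j - i := by omega
  simp only [belowWalk, ppTranspose, Set.mem_ofPred_eq, hs, add_comm (i : ℤ)]

theorem packed_rev (k : Fin c) : packed c k.rev = -packed c k := by
  simp only [packed, Fin.val_rev]
  omega

theorem rotate_mem_boundaryWalks (hu : u ∈ boundaryWalks a a c) :
    (fun s k ↦ -u s (Fin.rev k)) ∈ boundaryWalks a a c := by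
  rw [boundaryWalks_self] at hu ⊢
  obtain ⟨hzero, hmem, hstep, hconst, hfinish⟩ := hu
  have hpacked : (fun k ↦ -packed c k.rev) = packed c := by
    funext k
    rw [packed_rev, neg_neg]
  refine ⟨?_, fun s ↦ ⟨fun k l hkl ↦ ?_, fun k l ↦ ?_⟩, fun s hs k ↦ ?_, fun s hs ↦ ?_, ?_⟩
  · rw [hzero, hpacked]
  · exact neg_lt_neg ((hmem s).1 (Fin.rev_lt_rev.2 hkl))
  · rw [neg_sub_neg]
    exact (hmem s).2 l.rev k.rev
  · rw [neg_sub_neg, ← Int.natAbs_neg, neg_sub]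
    exact hstep s hs k.rev
  · rw [hconst s hs]
  · rw [Set.mem_singleton_iff.1 hfinish, hpacked, Set.mem_singleton_iff]

theorem belowWalk_rotate (hu : u ∈ boundaryWalks a a c) :
    belowWalk a a (fun s k ↦ -u s (Fin.rev k)) =
      ppTranspose (ppComplement (belowWalk a a u)) := by
  ext ⟨i, j, k⟩
  have hs : a + ((j.rev : Fin a) : ℕ) - (i.rev : Fin a) = a + i - j := by
    simp only [Fin.val_rev]
    omega
  obtain ⟨q, hq⟩ := hu.even_sub (by omega : a + (i : ℕ) - j ≤ a + a) k.rev
  simp only [belowWalk, ppTranspose, ppComplement, Set.mem_ofPred_eq, hs, packed_rev] at hq ⊢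
  simp only [Fin.val_rev]
  omega

theorem ppComplement_eq_ppTranspose_iff {T : Set (Fin a × Fin a × Fin c)} :
    ppComplement T = ppTranspose T ↔ ppTranspose (ppComplement T) = T :=
  ⟨fun h ↦ by rw [h]; rfl, fun h ↦ congrArg ppTranspose h⟩

end Symmetries

section Enumeration

theorem natCard_lowerSets (a c : ℕ) :
    (Nat.card {T : Set (Fin a × Fin a × Fin c) // IsLowerSet T} : ℤ) =
      det (of fun k l ↦ walkCount (2 * a) (packed c k - packed c l)) := by
  have hbij := bijOn_belowWalk (a := a) (b := a) (c := c)
  rw [boundaryWalks_self] at hbij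
  rw [← natCard_viciousWalk (packed_mem_viciousStates c) (packed_mem_viciousStates c).1]
  exact congrArg _ (Nat.card_congr hbij.equiv).symm

theorem natCard_symmetric_lowerSets (a b : ℕ) :
    (Nat.card {T : Set (Fin a × Fin a × Fin (2 * b)) // IsLowerSet T ∧ ppTranspose T = T} : ℤ) =
      det (of fun i j ↦ walkCount (2 * a) (halfPacked b i - halfPacked b j) +
        walkCount (2 * a) (halfPacked b i + halfPacked b j)) := by
  have hbij := bijOn_fixedPoints bijOn_belowWalk (fun _ ↦ reverse_mem_boundaryWalks)
    fun u _ ↦ belowWalk_reverse (a := a) (c := 2 * b) u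
  rw [boundaryWalks_self] at hbij
  have hhalf := bijOn_palindromic_freeWalk (viciousStates (2 * b)) (packed (2 * b)) a
  rw [← natCard_freeWalk_packed]
  exact congrArg _ (Nat.card_congr (hbij.equiv.symm.trans hhalf.equiv))

theorem natCard_transposeComplementary_lowerSets (a b : ℕ) :
    (Nat.card {T : Set (Fin a × Fin a × Fin (2 * b)) //
        IsLowerSet T ∧ ppComplement T = ppTranspose T} : ℤ) =
      det (of fun i j ↦ walkCount (2 * a) (halfPacked b i - halfPacked b j) -
        walkCount (2 * a) (halfPacked b i + halfPacked b j)) := by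
  have hbij := bijOn_fixedPoints (τ := fun T ↦ ppTranspose (ppComplement T)) bijOn_belowWalk
    (fun _ ↦ rotate_mem_boundaryWalks) fun _ ↦ belowWalk_rotate (a := a) (c := 2 * b)
  rw [boundaryWalks_self] at hbij
  have hhalf := bijOn_symmetric_positiveWalk (halfPacked b) (halfPacked b) (2 * a)
  rw [mirror_halfPacked] at hhalf
  rw [← natCard_positiveWalk (halfPacked_mem_positiveStates b) (halfPacked_mem_positiveStates b)]
  simp only [ppComplement_eq_ppTranspose_iff]
  exact congrArg _ (Nat.card_congr (hbij.equiv.symm.trans hhalf.equiv))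

end Enumeration

/-- Equation (1.1): `P(a,a,2b) = S(a,a,2b) · TC(a,a,2b)`.
Plane partitions in the box are identified with lower sets of
`{0,…,a−1} × {0,…,a−1} × {0,…,2b−1}` with the (componentwise) product order. -/
theorem pp_eq_symmetric_mul_transpose_complementary (a b : ℕ) :
    Nat.card {T : Set (Fin a × Fin a × Fin (2 * b)) // IsLowerSet T}
      = Nat.card {T : Set (Fin a × Fin a × Fin (2 * b)) //
          IsLowerSet T ∧ ppTranspose T = T}
        * Nat.card {T : Set (Fin a × Fin a × Fin (2 * b)) //
            IsLowerSet T ∧ ppComplement T = ppTranspose T} := by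
  zify
  rw [natCard_lowerSets, natCard_symmetric_lowerSets, natCard_transposeComplementary_lowerSets,
    ← mirror_halfPacked]
  exact det_sub_mirror (walkCount_neg (2 * a)) (halfPacked b)
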